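/- Let (u_i)_{i ∈ ℕ} be a sequence of vectors in a complex Hilbert space H such that ‖u_i‖ → 0 and Σ_i u_i ⊗ u_i ≤ I (the partial sums converge strongly to a positive operator bounded above by the identity). Suppose 0 ≤ t_i ≤ 1 for each i. Then there is a set of indices S ⊆ ℕ such that the operator Σ_{i ∈ S} u_i ⊗ u_i − Σ_{i=1}^∞ t_i u_i ⊗ u_i is a compact operator on H. -/

import Mathlib

open Filter

/-- The rank-one operator `u ⊗ u : v ↦ ⟨v, u⟩ u` on a complex Hilbert space. -/
noncomputable def rankOne {H : Type*} [NormedAddCommGroup H] [InnerProductSpace ℂ H]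
    (u : H) : H →L[ℂ] H :=
  (innerSL ℂ u).smulRight u

/-!
Split `ℕ` into consecutive finite blocks on which `‖u i‖` is small. On a block, a discrepancy bound
chooses the `t i` to be `0` or `1` while moving the operator `∑ t i • u i ⊗ u i` by at most `2⁻ᵏ` in
norm, so the differences over the blocks form a norm convergent series of finite rank operators.

For the discrepancy bound, each index carries two vectors, of which one is to be chosen with given
probabilities, so that the chosen sum exceeds its mean `E` by at most `τ`. The indices are treated
one at a time, as in the barrier argument of Marcus, Spielman and Srivastava. Averaging a function
over the two choices preserves real stability. The point `τ / 2 + (τ / 2) (1 - E)` is above the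
roots of `det`; moving by `1 + τ / 2` times the mean at each step, one reaches `τ + E`, which is
therefore above the roots of the fully averaged polynomial. Being above the roots of an average
implies being so for one of the choices, and a Hermitian matrix above the roots of `det` is positive
semidefinite.
-/

section Affine

variable {𝕜 V : Type*} [CommRing 𝕜] [AddCommGroup V]

/-- The backward difference of `f` along `a`. It plays the role of the directional derivative, with
which it coincides for functions that are affine along `a`. -/
def bwdDiff (a : V) (f : V → 𝕜) (x : V) : 𝕜 :=
  f x - f (x - a)

local notation "∇_[" a "]" => bwdDiff a

/-- The expectation of `f` at a random backward translate of its argument, by `w true` with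
probability `t` and by `w false` with probability `1 - t`. -/
def average (w : Bool → V) (t : 𝕜) (f : V → 𝕜) (x : V) : 𝕜 :=
  t * f (x - w true) + (1 - t) * f (x - w false)

theorem bwdDiff_comm (a b : V) (f : V → 𝕜) : ∇_[a] (∇_[b] f) = ∇_[b] (∇_[a] f) := by
  funext x
  simp only [bwdDiff, sub_right_comm x a b]
  ring

theorem bwdDiff_average (w : Bool → V) (t : 𝕜) (a : V) (f : V → 𝕜) :
    ∇_[a] (average w t f) = average w t (∇_[a] f) := by
  funext x
  simp only [bwdDiff, average, sub_right_comm x a]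
  ring

theorem sub_average (w : Bool → V) (t : 𝕜) (f : V → 𝕜) (x : V) :
    f x - average w t f x = t * ∇_[w true] f x + (1 - t) * ∇_[w false] f x := by
  simp only [bwdDiff, average]
  ring

variable [Module 𝕜 V]

/-- `f` is affine along each line whose direction lies in `R`, for instance a polynomial of degree
at most one in each variable when `R` is the standard basis. -/
def IsAffineAlong (R : Set V) (f : V → 𝕜) : Prop :=
  ∀ x, ∀ a ∈ R, ∀ s : 𝕜, f (x + s • a) = f x + s * ∇_[a] f x

/-- The expectation of a random vector that equals `w true` with probability `t` and `w false` with
probability `1 - t`. -/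
def mean (w : Bool → V) (t : 𝕜) : V :=
  t • w true + (1 - t) • w false

theorem map_mean {W : Type*} [AddCommGroup W] [Module 𝕜 W] (φ : V →ₗ[𝕜] W) (w : Bool → V)
    (t : 𝕜) : φ (mean w t) = mean (fun j => φ (w j)) t := by
  rw [mean, map_add, map_smul, map_smul, mean]

namespace IsAffineAlong

variable {R : Set V} {f : V → 𝕜}

theorem bwdDiff (hf : IsAffineAlong R f) (b : V) : IsAffineAlong R (∇_[b] f) := fun x a ha s => by
  have hsub : x + s • a - b = x - b + s • a := by abel
  simp only [_root_.bwdDiff, hsub, hf _ a ha, sub_right_comm x b a]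
  ring

theorem average (hf : IsAffineAlong R f) (w : Bool → V) (t : 𝕜) :
    IsAffineAlong R (average w t f) := fun x a ha s => by
  have hsub (j : Bool) : x + s • a - w j = x - w j + s • a := by abel
  rw [bwdDiff_average]
  simp only [_root_.average, hsub, hf _ a ha]
  ring

theorem apply_add (hf : IsAffineAlong R f) (x : V) {a : V} (ha : a ∈ R) :
    f (x + a) = f x + ∇_[a] f x := by
  simpa only [one_smul, one_mul] using hf x a ha 1

theorem bwdDiff_self (hf : IsAffineAlong R f) {a : V} (ha : a ∈ R) (x : V) :
    ∇_[a] (∇_[a] f) x = 0 := by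
  have h := hf.apply_add (x - a) ha
  rw [sub_add_cancel] at h
  change f x - f (x - a) - ∇_[a] f (x - a) = 0
  rw [h]
  ring

theorem apply_add_smul_mean (hf : IsAffineAlong R f) {w : Bool → V} (hw : ∀ j, w j ∈ R) (t : 𝕜)
    (x : V) (s : 𝕜) :
    f (x + s • mean w t) = f x + (f x - _root_.average w t f x) * s
      + t * (1 - t) * ∇_[w true] (∇_[w false] f) x * s ^ 2 := by
  rw [mean, smul_add, smul_smul, smul_smul, ← add_assoc, hf _ _ (hw false), hf x _ (hw true),
    hf.bwdDiff (w false) x _ (hw true), sub_average]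
  ring

theorem sub_average_add_smul_mean (hf : IsAffineAlong R f) {w : Bool → V} (hw : ∀ j, w j ∈ R)
    (t : 𝕜) (x : V) (s : 𝕜) :
    f (x + s • mean w t) - _root_.average w t f (x + s • mean w t)
      = f x - _root_.average w t f x
        + 2 * (t * (1 - t) * ∇_[w true] (∇_[w false] f) x) * s := by
  have h (b : V) : ∇_[b] f (x + s • mean w t) = ∇_[b] f x
      + s * t * ∇_[w true] (∇_[b] f) x + s * (1 - t) * ∇_[w false] (∇_[b] f) x
      + s * t * (s * (1 - t)) * ∇_[w true] (∇_[w false] (∇_[b] f)) x := by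
    rw [(hf.bwdDiff b).apply_add_smul_mean hw, sub_average]
    ring
  have htrue : ∇_[w true] (∇_[w false] (∇_[w true] f)) x = 0 := by
    rw [bwdDiff_comm (w false), (hf.bwdDiff (w false)).bwdDiff_self (hw true)]
  have hfalse : ∇_[w true] (∇_[w false] (∇_[w false] f)) x = 0 := by
    rw [bwdDiff_comm (w true), bwdDiff_comm (w true),
      (hf.bwdDiff (w true)).bwdDiff_self (hw false)]
  rw [sub_average, sub_average, h, h, htrue, hfalse, hf.bwdDiff_self (hw true),
    hf.bwdDiff_self (hw false), bwdDiff_comm (w false)]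
  ring

end IsAffineAlong

end Affine

section Barrier

variable {V : Type*} [AddCommGroup V] {R : Set V} {f : V → ℝ} {x : V}

local notation "∇_[" a "]" => bwdDiff a

/-- `x` lies above the roots of `f`, in the terminology of Marcus, Spielman and Srivastava: `f` is
positive on the translate by `x` of the cone generated by `R`. -/
def IsAbove (R : Set V) (f : V → ℝ) (x : V) : Prop :=
  ∀ y ∈ AddSubmonoid.closure R, 0 < f (x + y)

theorem IsAbove.pos (hx : IsAbove R f x) : 0 < f x := by
  simpa only [add_zero] using hx 0 (zero_mem _)

theorem IsAbove.add (hx : IsAbove R f x) {y : V} (hy : y ∈ AddSubmonoid.closure R) :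
    IsAbove R f (x + y) := fun z hz => by
  simpa only [add_assoc] using hx (y + z) (add_mem hy hz)

theorem IsAbove.average {w : Bool → V} {t : ℝ} (ht : t ∈ Set.Icc 0 1)
    (h : ∀ j, IsAbove R f (x - w j)) : IsAbove R (average w t f) x := fun y hy => by
  have hpos (j : Bool) : 0 < f (x + y - w j) := by
    simpa only [sub_add_eq_add_sub] using h j y hy
  rcases ht.1.eq_or_lt with rfl | ht0
  · simpa [_root_.average] using hpos false
  · exact add_pos_of_pos_of_nonneg (mul_pos ht0 (hpos true))
      (mul_nonneg (sub_nonneg.2 ht.2) (hpos false).le)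

theorem exists_isAbove_average {w : Bool → V} {t : ℝ} (ht : t ∈ Set.Icc 0 1)
    (hf : ∀ x, ∃ y ∈ AddSubmonoid.closure R, IsAbove R f (x + y)) (x : V) :
    ∃ y ∈ AddSubmonoid.closure R, IsAbove R (average w t f) (x + y) := by
  choose y hy hxy using fun j => hf (x - w j)
  refine ⟨y true + y false, add_mem (hy true) (hy false),
    IsAbove.average ht (Bool.forall_bool.2 ⟨?_, ?_⟩)⟩
  · rw [show x + (y true + y false) - w false = x - w false + y false + y true by abel]
    exact (hxy false).add (hy true)
  · rw [show x + (y true + y false) - w true = x - w true + y true + y false by abel]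
    exact (hxy true).add (hy false)

theorem sub_average_le {w : Bool → V} {t δ : ℝ} (ht : t ∈ Set.Icc 0 1)
    (hδ : ∀ j, δ * ∇_[w j] f x ≤ (δ - 1) * f x) :
    δ * (f x - average w t f x) ≤ (δ - 1) * f x := by
  rw [sub_average]
  linarith [mul_le_mul_of_nonneg_left (hδ true) ht.1,
    mul_le_mul_of_nonneg_left (hδ false) (sub_nonneg.2 ht.2)]

variable [Module ℝ V]

/-- The properties of a real stable polynomial that the barrier argument needs: degree at most one
along the directions of `R`, the Rayleigh inequalities, and enough points above the roots. -/
structure IsRayleigh (R : Set V) (f : V → ℝ) : Prop where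
  isAffineAlong : IsAffineAlong R f
  mul_bwdDiff_le : ∀ x, ∀ a ∈ R, ∀ b ∈ R, f x * ∇_[a] (∇_[b] f) x ≤ ∇_[a] f x * ∇_[b] f x
  exists_isAbove : ∀ x, ∃ y ∈ AddSubmonoid.closure R, IsAbove R f (x + y)

theorem nonneg_of_forall_add_mul_nonneg {c d : ℝ} (h : ∀ s : ℝ, 0 ≤ s → 0 ≤ c + s * d) :
    0 ≤ d := by
  by_contra! hd
  have hs := h ((|c| + 1) / -d) (div_nonneg (by positivity) (by linarith))
  rw [div_mul_eq_mul_div, mul_div_assoc, div_neg, div_self hd.ne] at hs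
  linarith [le_abs_self c]

theorem smul_mem_closure (hR : ∀ a ∈ R, ∀ s : ℝ, 0 ≤ s → s • a ∈ R) {s : ℝ} (hs : 0 ≤ s) {y : V}
    (hy : y ∈ AddSubmonoid.closure R) : s • y ∈ AddSubmonoid.closure R := by
  induction hy using AddSubmonoid.closure_induction with
  | mem a ha => exact AddSubmonoid.subset_closure (hR a ha s hs)
  | zero => simp only [smul_zero, zero_mem]
  | add y z _ _ hy hz => simpa only [smul_add] using add_mem hy hz

theorem mean_mem_closure (hR : ∀ a ∈ R, ∀ s : ℝ, 0 ≤ s → s • a ∈ R) {w : Bool → V}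
    (hw : ∀ j, w j ∈ R) {t : ℝ} (ht : t ∈ Set.Icc 0 1) : mean w t ∈ AddSubmonoid.closure R :=
  add_mem (AddSubmonoid.subset_closure (hR _ (hw true) _ ht.1))
    (AddSubmonoid.subset_closure (hR _ (hw false) _ (sub_nonneg.2 ht.2)))

theorem bwdDiff_nonneg (hR : ∀ a ∈ R, ∀ s : ℝ, 0 ≤ s → s • a ∈ R) (hf : IsAffineAlong R f)
    (hx : IsAbove R f x) {a : V} (ha : a ∈ R) : 0 ≤ ∇_[a] f x :=
  nonneg_of_forall_add_mul_nonneg (c := f x) fun s hs => by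
    rw [← hf x a ha s]
    exact (hx _ (AddSubmonoid.subset_closure (hR a ha s hs))).le

theorem bwdDiff_bwdDiff_nonneg (hR : ∀ a ∈ R, ∀ s : ℝ, 0 ≤ s → s • a ∈ R) (hf : IsAffineAlong R f)
    (hx : IsAbove R f x) {a b : V} (ha : a ∈ R) (hb : b ∈ R) : 0 ≤ ∇_[a] (∇_[b] f) x :=
  nonneg_of_forall_add_mul_nonneg (c := ∇_[b] f x) fun s hs => by
    rw [← hf.bwdDiff b x a ha s]
    exact bwdDiff_nonneg hR hf (hx.add (AddSubmonoid.subset_closure (hR a ha s hs))) hb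

namespace IsRayleigh

theorem bwdDiff_mul_le (hf : IsRayleigh R f) (hx : IsAbove R f x) {v : V} (hv : v ∈ R) {y : V}
    (hy : y ∈ AddSubmonoid.closure R) : ∇_[v] f (x + y) * f x ≤ ∇_[v] f x * f (x + y) := by
  induction hy using AddSubmonoid.closure_induction_right with
  | zero => rw [add_zero]
  | add_right y hy a ha ih =>
    have hstep : ∇_[v] f (x + y + a) * f (x + y) ≤ ∇_[v] f (x + y) * f (x + y + a) := by
      rw [hf.isAffineAlong.apply_add _ ha, (hf.isAffineAlong.bwdDiff v).apply_add _ ha]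
      linarith [hf.mul_bwdDiff_le (x + y) a ha v hv]
    rw [← add_assoc]
    refine le_of_mul_le_mul_right ?_ (hx y hy)
    calc ∇_[v] f (x + y + a) * f x * f (x + y)
        = ∇_[v] f (x + y + a) * f (x + y) * f x := by ring
      _ ≤ ∇_[v] f (x + y) * f (x + y + a) * f x := by gcongr; exact hx.pos.le
      _ = ∇_[v] f (x + y) * f x * f (x + y + a) := by ring
      _ ≤ ∇_[v] f x * f (x + y) * f (x + y + a) := by
          gcongr
          exact ((hx.add hy).add (AddSubmonoid.subset_closure ha)).pos.le
      _ = ∇_[v] f x * f (x + y + a) * f (x + y) := by ring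

theorem isAbove_sub (hf : IsRayleigh R f) (hx : IsAbove R f x) {a : V} (ha : a ∈ R)
    (hpos : 0 < f (x - a)) : IsAbove R f (x - a) := fun y hy => by
  have hle := hf.bwdDiff_mul_le hx ha hy
  simp only [bwdDiff] at hle
  rw [sub_add_eq_add_sub]
  refine pos_of_mul_pos_left ?_ hx.pos.le
  linarith [mul_pos hpos (hx y hy)]

theorem exists_apply_sub_nonpos (hf : IsRayleigh R f) {v : V} (hv : v ∈ R) (hx : f x ≤ 0)
    (hxv : 0 < f (x + v)) : ∃ z : ℝ, 0 ≤ z ∧ ∀ a ∈ R, f (x + z • v - a) ≤ 0 := by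
  have hd : 0 < ∇_[v] f x := by
    rw [hf.isAffineAlong.apply_add x hv] at hxv
    linarith
  set z := -f x / ∇_[v] f x
  have hroot : f (x + z • v) = 0 := by
    rw [hf.isAffineAlong x v hv, div_mul_cancel₀ _ hd.ne', add_neg_cancel]
  have hdz : ∇_[v] f (x + z • v) = ∇_[v] f x := by
    rw [hf.isAffineAlong.bwdDiff v x v hv, hf.isAffineAlong.bwdDiff_self hv, mul_zero, add_zero]
  refine ⟨z, div_nonneg (by linarith) hd.le, fun a ha => ?_⟩
  have hle := hf.mul_bwdDiff_le (x + z • v) a ha v hv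
  rw [hroot, zero_mul, hdz] at hle
  have hda : 0 ≤ f (x + z • v) - f (x + z • v - a) := nonneg_of_mul_nonneg_left hle hd
  linarith

theorem isAbove_of_isAbove_average (hR : ∀ a ∈ R, ∀ s : ℝ, 0 ≤ s → s • a ∈ R)
    (hf : IsRayleigh R f) {w : Bool → V} (hw : ∀ j, w j ∈ R) {t : ℝ} (ht : t ∈ Set.Icc 0 1)
    (hx : IsAbove R (average w t f) x) : IsAbove R f x := by
  have hstep {z v : V} (hv : v ∈ R) (hz : IsAbove R (average w t f) z)
      (hzv : IsAbove R f (z + v)) : IsAbove R f z := by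
    rcases lt_or_ge 0 (f z) with hpos | hneg
    · simpa using hf.isAbove_sub hzv hv (by simpa using hpos)
    · obtain ⟨s, hs, hroot⟩ := hf.exists_apply_sub_nonpos hv hneg hzv.pos
      have hpos := hz _ (AddSubmonoid.subset_closure (hR v hv s hs))
      have htrue := mul_nonpos_of_nonneg_of_nonpos ht.1 (hroot _ (hw true))
      have hfalse := mul_nonpos_of_nonneg_of_nonpos (sub_nonneg.2 ht.2) (hroot _ (hw false))
      exact absurd (add_nonpos htrue hfalse) hpos.not_ge
  obtain ⟨y, hy, hxy⟩ := hf.exists_isAbove x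
  induction hy using AddSubmonoid.closure_induction_right with
  | zero => simpa only [add_zero] using hxy
  | add_right y hy v hv ih =>
    exact ih (hstep hv (hx.add hy) (by simpa only [add_assoc] using hxy))

theorem exists_isAbove_sub (hR : ∀ a ∈ R, ∀ s : ℝ, 0 ≤ s → s • a ∈ R) (hf : IsRayleigh R f)
    {w : Bool → V} (hw : ∀ j, w j ∈ R) {t : ℝ} (ht : t ∈ Set.Icc 0 1)
    (hx : IsAbove R (average w t f) x) : ∃ j, IsAbove R f (x - w j) := by
  have habove := hf.isAbove_of_isAbove_average hR hw ht hx
  by_contra! hnot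
  have hle (j : Bool) : f (x - w j) ≤ 0 :=
    not_lt.1 fun hpos => hnot j (hf.isAbove_sub habove (hw j) hpos)
  have htrue := mul_nonpos_of_nonneg_of_nonpos ht.1 (hle true)
  have hfalse := mul_nonpos_of_nonneg_of_nonpos (sub_nonneg.2 ht.2) (hle false)
  exact absurd (add_nonpos htrue hfalse) hx.pos.not_ge

end IsRayleigh

theorem quadratic_sub_deriv_mul_le {h₀ h₁ h₂ d₀ d₁ d₂ δ : ℝ} (hh₀ : 0 < h₀) (hh₂ : 0 ≤ h₂)
    (hdecr : ∀ s, (d₁ + 2 * d₂ * s) * (h₀ + h₁ * s + h₂ * s ^ 2)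
      ≤ (d₀ + d₁ * s + d₂ * s ^ 2) * (h₁ + 2 * h₂ * s))
    (hδ₁ : 1 ≤ δ) (hδ₂ : δ ≤ 2) (hδ : δ * h₁ ≤ (δ - 1) * h₀) :
    ((d₀ + d₁ * δ + d₂ * δ ^ 2) - (d₁ + 2 * d₂ * δ)) * h₀
      ≤ d₀ * ((h₀ + h₁ * δ + h₂ * δ ^ 2) - (h₁ + 2 * h₂ * δ)) := by
  set α := d₀ * h₁ - d₁ * h₀ with hα
  set β := d₀ * h₂ - d₂ * h₀ with hβ
  set γ := d₁ * h₂ - d₂ * h₁ with hγ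
  have hα0 : 0 ≤ α := by linarith [hdecr 0]
  have hdisc : β * β ≤ α * γ := by
    have h := discrim_le_zero (a := γ) (b := 2 * β) (c := α) fun s => by
      linarith [hdecr s]
    rw [discrim] at h
    linarith
  suffices hkey : β * δ * (2 - δ) ≤ α * (δ - 1) by linarith
  have hαδ : 0 ≤ α * (δ - 1) := mul_nonneg hα0 (by linarith)
  rcases le_or_gt β 0 with hβ0 | hβ0
  · exact (mul_nonpos_of_nonpos_of_nonneg (mul_nonpos_of_nonpos_of_nonneg hβ0 (by linarith))
      (by linarith)).trans hαδ
  have hγle : h₀ * γ ≤ h₁ * β := by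
    have hrel : h₁ * β = h₂ * α + h₀ * γ := by rw [hα, hβ, hγ]; ring
    rw [hrel]
    exact le_add_of_nonneg_left (mul_nonneg hh₂ hα0)
  have hβle : h₀ * β ≤ α * h₁ := by
    refine le_of_mul_le_mul_right ?_ hβ0
    linarith [mul_le_mul_of_nonneg_left hγle hα0, mul_le_mul_of_nonneg_left hdisc hh₀.le]
  have hβδ : β * δ ≤ α * (δ - 1) := by
    refine le_of_mul_le_mul_left ?_ hh₀
    linarith [mul_le_mul_of_nonneg_left hδ hα0,
      mul_le_mul_of_nonneg_right hβle (zero_le_one.trans hδ₁)]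
  calc β * δ * (2 - δ) ≤ α * (δ - 1) * (2 - δ) := by gcongr
    _ ≤ α * (δ - 1) := mul_le_of_le_one_right hαδ (by linarith)

section Average

variable {w : Bool → V} {t δ : ℝ}

namespace IsRayleigh

theorem sub_average_mul_le (hf : IsRayleigh R f) (hx : IsAbove R f x)
    (hw : ∀ j, w j ∈ R) (ht : t ∈ Set.Icc 0 1) {y : V} (hy : y ∈ AddSubmonoid.closure R) :
    (f (x + y) - average w t f (x + y)) * f x ≤ (f x - average w t f x) * f (x + y) := by
  rw [sub_average, sub_average]
  linarith [mul_le_mul_of_nonneg_left (hf.bwdDiff_mul_le hx (hw true) hy) ht.1,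
    mul_le_mul_of_nonneg_left (hf.bwdDiff_mul_le hx (hw false) hy) (sub_nonneg.2 ht.2)]

theorem isAbove_average_add (hR : ∀ a ∈ R, ∀ s : ℝ, 0 ≤ s → s • a ∈ R) (hf : IsRayleigh R f)
    (hx : IsAbove R f x) (hw : ∀ j, w j ∈ R) (ht : t ∈ Set.Icc 0 1) (hδ₁ : 1 ≤ δ)
    (hδ : δ * (f x - average w t f x) ≤ (δ - 1) * f x) :
    IsAbove R (average w t f) (x + δ • mean w t) := fun y hy => by
  have hδ₀ : 0 < δ := zero_lt_one.trans_le hδ₁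
  have hz : δ • mean w t + y ∈ AddSubmonoid.closure R :=
    add_mem (smul_mem_closure hR hδ₀.le (mean_mem_closure hR hw ht)) hy
  rw [add_assoc]
  set z := δ • mean w t + y
  have hle : f x ≤ δ * average w t f x := by linarith
  have hpos : 0 < f x * f (x + z) := mul_pos hx.pos (hx z hz)
  refine pos_of_mul_pos_left (b := δ * f x) ?_ (mul_nonneg hδ₀.le hx.pos.le)
  linarith [mul_le_mul_of_nonneg_left (hf.sub_average_mul_le hx hw ht hz) hδ₀.le,
    mul_le_mul_of_nonneg_right hle (hx z hz).le]

theorem bwdDiff_average_mul_le (hR : ∀ a ∈ R, ∀ s : ℝ, 0 ≤ s → s • a ∈ R) (hf : IsRayleigh R f)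
    (hx : IsAbove R f x) (hw : ∀ j, w j ∈ R) (ht : t ∈ Set.Icc 0 1) (hδ₁ : 1 ≤ δ) (hδ₂ : δ ≤ 2)
    (hδ : δ * (f x - average w t f x) ≤ (δ - 1) * f x) {v : V} (hv : v ∈ R) :
    ∇_[v] (average w t f) (x + δ • mean w t) * f x
      ≤ ∇_[v] f x * average w t f (x + δ • mean w t) := by
  have hf' := hf.isAffineAlong
  have hquad : 0 ≤ t * (1 - t) * ∇_[w true] (∇_[w false] f) x :=
    mul_nonneg (mul_nonneg ht.1 (sub_nonneg.2 ht.2))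
      (bwdDiff_bwdDiff_nonneg hR hf' hx (hw true) (hw false))
  have hdecr (y : V) : (∇_[v] f y - average w t (∇_[v] f) y) * f y
      ≤ ∇_[v] f y * (f y - average w t f y) := by
    rw [sub_average, sub_average]
    linarith [mul_le_mul_of_nonneg_left (hf.mul_bwdDiff_le y _ (hw true) v hv) ht.1,
      mul_le_mul_of_nonneg_left (hf.mul_bwdDiff_le y _ (hw false) v hv) (sub_nonneg.2 ht.2)]
  have hle := quadratic_sub_deriv_mul_le (d₀ := ∇_[v] f x)
    (d₁ := ∇_[v] f x - average w t (∇_[v] f) x)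
    (d₂ := t * (1 - t) * ∇_[w true] (∇_[w false] (∇_[v] f)) x) hx.pos hquad (fun s => by
      rw [← hf'.sub_average_add_smul_mean hw, ← (hf'.bwdDiff v).sub_average_add_smul_mean hw,
        ← hf'.apply_add_smul_mean hw, ← (hf'.bwdDiff v).apply_add_smul_mean hw]
      exact hdecr (x + s • mean w t)) hδ₁ hδ₂ hδ
  rwa [← hf'.apply_add_smul_mean hw, ← (hf'.bwdDiff v).apply_add_smul_mean hw,
    ← hf'.sub_average_add_smul_mean hw, ← (hf'.bwdDiff v).sub_average_add_smul_mean hw,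
    sub_sub_cancel, sub_sub_cancel, ← bwdDiff_average] at hle

theorem mul_bwdDiff_average_le (hR : ∀ a ∈ R, ∀ s : ℝ, 0 ≤ s → s • a ∈ R) (hf : IsRayleigh R f)
    (hx : IsAbove R f x) (hw : ∀ j, w j ∈ R) (ht : t ∈ Set.Icc 0 1) (hδ₁ : 1 ≤ δ) (hδ₂ : δ ≤ 2)
    (hδ : δ * (f x - average w t f x) ≤ (δ - 1) * f x) {v : V} (hv : v ∈ R)
    (hδv : δ * ∇_[v] f x ≤ (δ - 1) * f x) :
    δ * ∇_[v] (average w t f) (x + δ • mean w t)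
      ≤ (δ - 1) * average w t f (x + δ • mean w t) := by
  have hpos := (hf.isAbove_average_add hR hx hw ht hδ₁ hδ).pos
  have hle := hf.bwdDiff_average_mul_le hR hx hw ht hδ₁ hδ₂ hδ hv
  refine le_of_mul_le_mul_right ?_ hx.pos
  linarith [mul_le_mul_of_nonneg_left hle (zero_le_one.trans hδ₁),
    mul_le_mul_of_nonneg_right hδv hpos.le]

end IsRayleigh

end Average

theorem exists_isAbove_add_sum_sub_sum (hR : ∀ a ∈ R, ∀ s : ℝ, 0 ≤ s → s • a ∈ R)
    {𝓕 : Set (V → ℝ)} (h𝓕 : ∀ f ∈ 𝓕, IsRayleigh R f)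
    (havg : ∀ f ∈ 𝓕, ∀ w : Bool → V, (∀ j, w j ∈ R) → ∀ t ∈ Set.Icc (0 : ℝ) 1,
      average w t f ∈ 𝓕)
    {ι : Type*} {w : ι → Bool → V} (hw : ∀ i j, w i j ∈ R) {t : ι → ℝ}
    (ht : ∀ i, t i ∈ Set.Icc 0 1) {δ : ℝ} (hδ₁ : 1 ≤ δ) (hδ₂ : δ ≤ 2) (s : Finset ι)
    (hf : f ∈ 𝓕) (hx : IsAbove R f x) (hδ : ∀ i ∈ s, ∀ j, δ * ∇_[w i j] f x ≤ (δ - 1) * f x) :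
    ∃ c : ι → Bool,
      IsAbove R f (x + δ • ∑ i ∈ s, mean (w i) (t i) - ∑ i ∈ s, w i (c i)) := by
  classical
  induction s using Finset.induction generalizing f x with
  | empty => exact ⟨fun _ => true, by simpa using hx⟩
  | insert i s hi ih =>
    have hfR := h𝓕 f hf
    have hδi := sub_average_le (ht i) (hδ i (Finset.mem_insert_self i s))
    obtain ⟨c, hc⟩ := ih (havg f hf (w i) (hw i) (t i) (ht i))
      (hfR.isAbove_average_add hR hx (hw i) (ht i) hδ₁ hδi) fun k hk j =>
      hfR.mul_bwdDiff_average_le hR hx (hw i) (ht i) hδ₁ hδ₂ hδi (hw k j)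
        (hδ k (Finset.mem_insert_of_mem hk) j)
    obtain ⟨j, hj⟩ := hfR.exists_isAbove_sub hR (hw i) (ht i) hc
    refine ⟨Function.update c i j, ?_⟩
    have hsum : ∑ k ∈ s, w k (Function.update c i j k) = ∑ k ∈ s, w k (c k) :=
      Finset.sum_congr rfl fun k hk => by
        rw [Function.update_of_ne (ne_of_mem_of_not_mem hk hi)]
    rw [Finset.sum_insert hi, Finset.sum_insert hi, hsum, Function.update_self, smul_add,
      ← add_assoc, add_comm (w i j), ← sub_sub]
    exact hj

end Barrier

section RealStable

open Matrix
open scoped ComplexOrder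

local notation "∇_[" a "]" => bwdDiff a

theorem exists_forall_det_add_smul_vecMulVec {𝕜 n : Type*} [CommRing 𝕜] [Fintype n]
    [DecidableEq n] (M : Matrix n n 𝕜) (u w : n → 𝕜) :
    ∃ c, ∀ z : 𝕜, (M + z • vecMulVec u w).det = M.det + z * c := by
  let B : Matrix (n ⊕ Unit) (n ⊕ Unit) 𝕜 := fromBlocks M (replicateCol Unit u) 0 1
  let row : n ⊕ Unit → 𝕜 := Sum.elim (-w) 0
  refine ⟨(B.updateRow (.inr ()) row).det, fun z => ?_⟩
  have hblock : fromBlocks M (replicateCol Unit u) (replicateRow Unit (-(z • w))) 1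
      = B.updateRow (.inr ()) (B (.inr ()) + z • row) := by
    ext (i | i) (j | j) <;> simp [B, row, updateRow_apply]
  have hschur : M + z • vecMulVec u w
      = M - replicateCol Unit u * replicateRow Unit (-(z • w)) := by
    rw [← vecMulVec_eq, vecMulVec_neg, sub_neg_eq_add, vecMulVec_smul]
  rw [hschur, ← det_fromBlocks_one₂₂, hblock, det_updateRow_add, updateRow_eq_self,
    det_updateRow_smul]
  simp only [B, det_fromBlocks_zero₂₁, det_one, mul_one]

theorem det_smul_one_sub_vecMulVec {𝕜 n : Type*} [Field 𝕜] [Fintype n] [DecidableEq n] {c : 𝕜}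
    (hc : c ≠ 0) (u w : n → 𝕜) :
    (c • (1 : Matrix n n 𝕜) - vecMulVec u w).det
      = (1 - w ⬝ᵥ u / c) * (c • (1 : Matrix n n 𝕜)).det := by
  have hfactor : c • (1 : Matrix n n 𝕜) - vecMulVec u w
      = c • (1 + replicateCol Unit (-(c⁻¹ • u)) * replicateRow Unit w) := by
    rw [← vecMulVec_eq, neg_vecMulVec, smul_vecMulVec, smul_add, smul_neg, smul_smul,
      mul_inv_cancel₀ hc, one_smul, sub_eq_add_neg]
  rw [hfactor, det_smul, det_one_add_replicateCol_mul_replicateRow, det_smul, det_one,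
    dotProduct_neg, dotProduct_smul, smul_eq_mul, mul_one, mul_comm, sub_eq_add_neg,
    div_eq_inv_mul]

theorem im_mul_conj_neg_or_eq_zero {A B : ℂ} (h : ∀ z : ℂ, 0 ≤ z.im → A + z * B ≠ 0) :
    (B * starRingEnd ℂ A).im < 0 ∨ B = 0 := by
  by_contra! hcon
  obtain ⟨him, hB⟩ := hcon
  refine h (-A / B) ?_ (by rw [div_mul_cancel₀ _ hB, add_neg_cancel])
  have hdiv : (-A / B).im = (B * starRingEnd ℂ A).im / Complex.normSq B := by
    simp only [Complex.div_im, Complex.neg_im, Complex.neg_re, Complex.mul_im, Complex.conj_im,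
      Complex.conj_re]
    ring
  rw [hdiv]
  exact div_nonneg him (Complex.normSq_nonneg B)

theorem im_mul_conj_nonpos {A B : ℂ} (h : (B * starRingEnd ℂ A).im < 0 ∨ B = 0) :
    (B * starRingEnd ℂ A).im ≤ 0 :=
  h.elim le_of_lt fun hB => by rw [hB, zero_mul, Complex.zero_im]

theorem ne_combination_of_im_mul_conj_neg_or_eq_zero {A B C : ℂ} {t : ℝ} (ht : t ∈ Set.Icc 0 1)
    (hA : A ≠ 0) (hB : (B * starRingEnd ℂ A).im < 0 ∨ B = 0)
    (hC : (C * starRingEnd ℂ A).im < 0 ∨ C = 0) : A ≠ t * B + (1 - t) * C := by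
  have hterm {c : ℝ} {D : ℂ} (hD : (D * starRingEnd ℂ A).im < 0 ∨ D = 0)
      (hc : c * (D * starRingEnd ℂ A).im = 0) : (c : ℂ) * D = 0 := by
    rcases hD with hD | rfl
    · rw [(mul_eq_zero.1 hc).resolve_right hD.ne, Complex.ofReal_zero, zero_mul]
    · exact mul_zero _
  intro hcomb
  rw [← Complex.ofReal_one, ← Complex.ofReal_sub] at hcomb
  have him : t * (B * starRingEnd ℂ A).im + (1 - t) * (C * starRingEnd ℂ A).im = 0 := by
    have h := congrArg (fun D => (D * starRingEnd ℂ A).im) hcomb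
    simpa only [Complex.mul_conj, Complex.ofReal_im, add_mul, mul_assoc, Complex.add_im,
      Complex.im_ofReal_mul] using h.symm
  have hBle := mul_nonpos_of_nonneg_of_nonpos ht.1 (im_mul_conj_nonpos hB)
  have hCle := mul_nonpos_of_nonneg_of_nonpos (sub_nonneg.2 ht.2) (im_mul_conj_nonpos hC)
  rw [hterm hB (by linarith), hterm hC (by linarith), add_zero] at hcomb
  exact hA hcomb

variable {n : Type*}

/-- The Hermitian rank-one matrix `v vᴴ`. -/
def outer (v : EuclideanSpace ℂ n) : selfAdjoint (Matrix n n ℂ) :=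
  ⟨vecMulVec v (star v), by
    rw [selfAdjoint.mem_iff, star_eq_conjTranspose, conjTranspose_vecMulVec, star_star]⟩

/-- The restriction to Hermitian matrices of the real part of a function of complex matrices. -/
def hermRe (P : Matrix n n ℂ → ℂ) (X : selfAdjoint (Matrix n n ℂ)) : ℝ :=
  (P X).re

theorem hermRe_average (v : Bool → EuclideanSpace ℂ n) (t : ℝ) (P : Matrix n n ℂ → ℂ) :
    hermRe (average (fun j => (outer (v j) : Matrix n n ℂ)) (t : ℂ) P)
      = average (fun j => outer (v j)) t (hermRe P) := by
  funext X
  simp only [hermRe, average, AddSubgroup.coe_sub]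
  rw [← Complex.ofReal_one, ← Complex.ofReal_sub, Complex.add_re, Complex.re_ofReal_mul,
    Complex.re_ofReal_mul]

theorem smul_mem_range_outer : ∀ a ∈ Set.range (outer (n := n)), ∀ s : ℝ, 0 ≤ s →
    s • a ∈ Set.range (outer (n := n)) := by
  rintro _ ⟨v, rfl⟩ s hs
  refine ⟨(√s : ℂ) • v, Subtype.ext ?_⟩
  simp only [outer, Complex.coe_smul, WithLp.ofLp_smul, star_smul, star_trivial, vecMulVec_smul,
    smul_vecMulVec, smul_smul, Real.mul_self_sqrt hs, selfAdjoint.val_smul]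

/-- A function of complex matrices with the properties of a real stable polynomial in the matrix
entries used here: it has degree at most one along rank-one Hermitian directions, does not vanish
on the Siegel upper half-space, and is real on Hermitian matrices. The condition `exists_isAbove`
normalizes its sign at infinity. -/
structure IsRealStable (P : Matrix n n ℂ → ℂ) : Prop where
  isAffineAlong : IsAffineAlong ((↑) '' Set.range (outer (n := n))) P
  ne_zero : ∀ X Y : selfAdjoint (Matrix n n ℂ), (Y : Matrix n n ℂ).PosDef →
    P (X + Complex.I • (Y : Matrix n n ℂ)) ≠ 0
  im_eq_zero : ∀ X : selfAdjoint (Matrix n n ℂ), (P X).im = 0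
  continuous : Continuous P
  exists_isAbove : ∀ X, ∃ Y ∈ AddSubmonoid.closure (Set.range outer),
    IsAbove (Set.range outer) (hermRe P) (X + Y)

variable {P : Matrix n n ℂ → ℂ}

theorem IsRealStable.ofReal_hermRe (hP : IsRealStable P) (X : selfAdjoint (Matrix n n ℂ)) :
    (hermRe P X : ℂ) = P X :=
  Complex.ext rfl (hP.im_eq_zero X).symm

theorem IsRealStable.ofReal_bwdDiff_hermRe (hP : IsRealStable P)
    (V X : selfAdjoint (Matrix n n ℂ)) :
    ((∇_[V] (hermRe P) X : ℝ) : ℂ) = ∇_[(V : Matrix n n ℂ)] P X := by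
  rw [bwdDiff, Complex.ofReal_sub, hP.ofReal_hermRe, hP.ofReal_hermRe]
  rfl

theorem IsRealStable.ofReal_bwdDiff_bwdDiff_hermRe (hP : IsRealStable P)
    (V W X : selfAdjoint (Matrix n n ℂ)) :
    ((∇_[V] (∇_[W] (hermRe P)) X : ℝ) : ℂ)
      = ∇_[(V : Matrix n n ℂ)] (∇_[(W : Matrix n n ℂ)] P) X := by
  rw [bwdDiff, Complex.ofReal_sub, hP.ofReal_bwdDiff_hermRe, hP.ofReal_bwdDiff_hermRe]
  rfl

section Finite

variable [Finite n]

theorem outer_posSemidef (v : EuclideanSpace ℂ n) : (outer v : Matrix n n ℂ).PosSemidef :=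
  posSemidef_vecMulVec_self_star _

theorem mem_closure_range_outer {Y : selfAdjoint (Matrix n n ℂ)} :
    Y ∈ AddSubmonoid.closure (Set.range outer) ↔ (Y : Matrix n n ℂ).PosSemidef := by
  constructor
  · intro hY
    induction hY using AddSubmonoid.closure_induction with
    | mem _ hv =>
      obtain ⟨v, rfl⟩ := hv
      exact outer_posSemidef v
    | zero => exact .zero
    | add _ _ _ _ hY hZ => exact hY.add hZ
  · intro hY
    obtain ⟨m, v, hYv⟩ := posSemidef_iff_eq_sum_vecMulVec.1 hY
    have hsum : Y = ∑ k, outer (WithLp.toLp 2 (v k)) := Subtype.ext (by simpa [outer] using hYv)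
    rw [hsum]
    exact sum_mem fun k _ => AddSubmonoid.subset_closure ⟨_, rfl⟩

namespace IsRealStable

theorem im_bwdDiff_mul_conj (hP : IsRealStable P) (X : selfAdjoint (Matrix n n ℂ))
    {Y : selfAdjoint (Matrix n n ℂ)} (hY : (Y : Matrix n n ℂ).PosDef) (v : EuclideanSpace ℂ n) :
    (∇_[(outer v : Matrix n n ℂ)] P (X + Complex.I • (Y : Matrix n n ℂ))
      * starRingEnd ℂ (P (X + Complex.I • (Y : Matrix n n ℂ)))).im < 0 ∨
    ∇_[(outer v : Matrix n n ℂ)] P (X + Complex.I • (Y : Matrix n n ℂ)) = 0 := by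
  refine im_mul_conj_neg_or_eq_zero fun z hz => ?_
  rw [← hP.isAffineAlong _ _ ⟨_, ⟨v, rfl⟩, rfl⟩]
  have hsplit : (X + Complex.I • (Y : Matrix n n ℂ) + z • (outer v : Matrix n n ℂ))
      = (X + z.re • outer v : selfAdjoint (Matrix n n ℂ))
        + Complex.I • ((Y + z.im • outer v : selfAdjoint (Matrix n n ℂ)) : Matrix n n ℂ) := by
    conv_lhs => rw [← Complex.re_add_im z]
    simp only [AddSubgroup.coe_add, selfAdjoint.val_smul, smul_add, add_smul, mul_smul,
      Complex.coe_smul, smul_comm Complex.I]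
    abel
  rw [hsplit]
  exact hP.ne_zero _ _ (hY.add_posSemidef ((outer_posSemidef v).smul hz))

theorem average (hP : IsRealStable P) (v : Bool → EuclideanSpace ℂ n) {t : ℝ}
    (ht : t ∈ Set.Icc 0 1) :
    IsRealStable (average (fun j => (outer (v j) : Matrix n n ℂ)) (t : ℂ) P) where
  isAffineAlong := hP.isAffineAlong.average _ _
  ne_zero X Y hY := by
    intro hzero
    refine ne_combination_of_im_mul_conj_neg_or_eq_zero ht (hP.ne_zero X Y hY)
      (hP.im_bwdDiff_mul_conj X hY (v true)) (hP.im_bwdDiff_mul_conj X hY (v false)) ?_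
    rw [← sub_average (fun j => (outer (v j) : Matrix n n ℂ)), hzero, sub_zero]
  im_eq_zero X := by
    have him (j : Bool) : (P (X - outer (v j))).im = 0 := hP.im_eq_zero (X - outer (v j))
    rw [_root_.average, ← Complex.ofReal_one, ← Complex.ofReal_sub, Complex.add_im,
      Complex.im_ofReal_mul, Complex.im_ofReal_mul, him, him, mul_zero, mul_zero, add_zero]
  continuous := by
    have hcont := hP.continuous
    unfold _root_.average
    fun_prop
  exists_isAbove := by
    rw [hermRe_average]
    exact exists_isAbove_average ht hP.exists_isAbove

theorem im_bwdDiff_mul_conj_nonpos (hP : IsRealStable P) (X : selfAdjoint (Matrix n n ℂ))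
    {Y : selfAdjoint (Matrix n n ℂ)} (hY : (Y : Matrix n n ℂ).PosSemidef)
    (v : EuclideanSpace ℂ n) :
    (∇_[(outer v : Matrix n n ℂ)] P (X + Complex.I • (Y : Matrix n n ℂ))
      * starRingEnd ℂ (P (X + Complex.I • (Y : Matrix n n ℂ)))).im ≤ 0 := by
  classical
  have := Fintype.ofFinite n
  have hcont := hP.continuous
  let Z (η : ℝ) : Matrix n n ℂ := X + Complex.I • (Y + η • 1)
  let F (η : ℝ) : ℝ := (∇_[(outer v : Matrix n n ℂ)] P (Z η) * starRingEnd ℂ (P (Z η))).im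
  have hF : Continuous F := by
    unfold F bwdDiff Z
    fun_prop
  have hneg (η : ℝ) (hη : η ∈ Set.Ioi 0) : F η ≤ 0 := by
    have hYη : ((Y + η • 1 : selfAdjoint (Matrix n n ℂ)) : Matrix n n ℂ).PosDef :=
      PosDef.posSemidef_add hY (PosDef.one.smul hη)
    exact im_mul_conj_nonpos (hP.im_bwdDiff_mul_conj X hYη v)
  have hlim : Tendsto F (nhdsWithin 0 (Set.Ioi 0)) (nhds (F 0)) :=
    (hF.tendsto 0).mono_left nhdsWithin_le_nhds
  have hF0 : F 0 ≤ 0 := le_of_tendsto hlim (eventually_nhdsWithin_of_forall hneg)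
  simpa only [F, Z, zero_smul, add_zero] using hF0

theorem isRayleigh (hP : IsRealStable P) : IsRayleigh (Set.range outer) (hermRe P) where
  isAffineAlong := by
    rintro X _ ⟨v, rfl⟩ s
    have h := congrArg Complex.re (hP.isAffineAlong X _ ⟨_, ⟨v, rfl⟩, rfl⟩ s)
    simpa [bwdDiff, hermRe] using h
  mul_bwdDiff_le := by
    rintro X _ ⟨a, rfl⟩ _ ⟨b, rfl⟩
    have h := hP.im_bwdDiff_mul_conj_nonpos X (outer_posSemidef a) b
    rw [hP.isAffineAlong _ _ ⟨_, ⟨a, rfl⟩, rfl⟩,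
      hP.isAffineAlong.bwdDiff _ _ _ ⟨_, ⟨a, rfl⟩, rfl⟩, ← hP.ofReal_hermRe,
      ← hP.ofReal_bwdDiff_hermRe, ← hP.ofReal_bwdDiff_hermRe,
      ← hP.ofReal_bwdDiff_bwdDiff_hermRe] at h
    simp only [map_add, Complex.conj_ofReal, map_mul, Complex.conj_I, Complex.mul_im,
      Complex.mul_re, Complex.add_im, Complex.add_re, Complex.neg_im, Complex.neg_re,
      Complex.ofReal_re, Complex.ofReal_im, Complex.I_re, Complex.I_im] at h
    linarith
  exists_isAbove := hP.exists_isAbove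

theorem exists_isAbove_add_sum_sub_sum (hP : IsRealStable P) {ι : Type*} (s : Finset ι)
    (w : ι → Bool → EuclideanSpace ℂ n) {t : ι → ℝ} (ht : ∀ i, t i ∈ Set.Icc 0 1) {δ : ℝ}
    (hδ₁ : 1 ≤ δ) (hδ₂ : δ ≤ 2) {X : selfAdjoint (Matrix n n ℂ)}
    (hX : IsAbove (Set.range outer) (hermRe P) X)
    (hδ : ∀ i ∈ s, ∀ j, δ * ∇_[outer (w i j)] (hermRe P) X ≤ (δ - 1) * hermRe P X) :
    ∃ c : ι → Bool, IsAbove (Set.range outer) (hermRe P)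
      (X + δ • ∑ i ∈ s, mean (fun j => outer (w i j)) (t i) - ∑ i ∈ s, outer (w i (c i))) := by
  have hRayleigh : ∀ f ∈ hermRe '' {Q : Matrix n n ℂ → ℂ | IsRealStable Q},
      IsRayleigh (Set.range outer) f := by
    rintro _ ⟨Q, hQ, rfl⟩
    exact hQ.isRayleigh
  have haverage : ∀ f ∈ hermRe '' {Q | IsRealStable Q},
      ∀ v : Bool → selfAdjoint (Matrix n n ℂ), (∀ j, v j ∈ Set.range outer) →
      ∀ t ∈ Set.Icc (0 : ℝ) 1, _root_.average v t f ∈ hermRe '' {Q | IsRealStable Q} := by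
    rintro _ ⟨Q, hQ, rfl⟩ v hv t ht
    choose v' hv' using hv
    obtain rfl : (fun j => outer (v' j)) = v := funext hv'
    exact ⟨_, hQ.average v' ht, hermRe_average _ _ _⟩
  have hR : ∀ a ∈ Set.range (outer (n := n)), ∀ s : ℝ, 0 ≤ s → s • a ∈ Set.range outer :=
    smul_mem_range_outer
  have hw (i : ι) (j : Bool) : outer (w i j) ∈ Set.range outer := Set.mem_range_self _
  exact _root_.exists_isAbove_add_sum_sub_sum (V := selfAdjoint (Matrix n n ℂ))
    (R := Set.range outer) hR hRayleigh haverage (w := fun i j => outer (w i j)) hw ht hδ₁ hδ₂ s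
    (Set.mem_image_of_mem hermRe hP) hX hδ

end IsRealStable

end Finite

variable [Fintype n] [DecidableEq n] {X : selfAdjoint (Matrix n n ℂ)}

theorem isAbove_det_of_posDef (hX : (X : Matrix n n ℂ).PosDef) :
    IsAbove (Set.range outer) (hermRe det) X := fun _ hY =>
  (Complex.pos_iff.1 (hX.add_posSemidef (mem_closure_range_outer.1 hY)).det_pos).1

theorem posSemidef_of_isAbove_det (hX : IsAbove (Set.range outer) (hermRe det) X) :
    (X : Matrix n n ℂ).PosSemidef := by
  have hherm : (X : Matrix n n ℂ).IsHermitian := X.2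
  rw [hherm.posSemidef_iff_eigenvalues_nonneg]
  intro i
  by_contra! hneg
  have hpos := hX ((-hherm.eigenvalues i) • 1)
    (mem_closure_range_outer.2 (PosSemidef.one.smul (neg_nonneg.2 hneg.le)))
  have hdet : det ((X : Matrix n n ℂ) + (-hherm.eigenvalues i) • 1) = 0 := by
    refine exists_mulVec_eq_zero_iff.1 ⟨(hherm.eigenvectorBasis i).ofLp, ?_, ?_⟩
    · simpa using hherm.eigenvectorBasis.orthonormal.ne_zero i
    · rw [add_mulVec, hherm.mulVec_eigenvectorBasis, smul_mulVec, one_mulVec, neg_smul,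
        add_neg_cancel]
  exact hpos.ne' (congrArg Complex.re hdet)

theorem isRealStable_det : IsRealStable (det : Matrix n n ℂ → ℂ) where
  isAffineAlong := by
    rintro M _ ⟨_, ⟨v, rfl⟩, rfl⟩ z
    obtain ⟨c, hc⟩ := exists_forall_det_add_smul_vecMulVec M v (star v)
    have hsub : M - vecMulVec v (star v) = M + (-1 : ℂ) • vecMulVec v (star v) := by
      rw [neg_one_smul, sub_eq_add_neg]
    simp only [outer, bwdDiff, hsub, hc]
    ring
  ne_zero X Y hY hdet := by
    obtain ⟨x, hx, hzero⟩ := exists_mulVec_eq_zero_iff.2 hdet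
    have hpos := hY.dotProduct_mulVec_pos hx
    have hreal : (star x ⬝ᵥ (X : Matrix n n ℂ) *ᵥ x).im = 0 :=
      IsHermitian.im_star_dotProduct_mulVec_self X.2 x
    have him := congrArg (fun y => (star x ⬝ᵥ y).im) hzero
    simp only [add_mulVec, smul_mulVec, dotProduct_add, dotProduct_smul, smul_eq_mul,
      Complex.add_im, hreal, Complex.mul_im, Complex.I_re, zero_mul, Complex.I_im, one_mul,
      zero_add, dotProduct_zero, Complex.zero_im] at him
    exact (Complex.pos_iff.1 hpos).1.ne' him
  im_eq_zero X := by
    have hX : star (X : Matrix n n ℂ) = X := X.2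
    rw [← Complex.conj_eq_iff_im, starRingEnd_apply, ← det_conjTranspose,
      ← star_eq_conjTranspose, hX]
  continuous := by fun_prop
  exists_isAbove X := by
    have hsq (Z : selfAdjoint (Matrix n n ℂ)) : ((Z : Matrix n n ℂ) * Z).PosSemidef := by
      simpa only [← star_eq_conjTranspose, Z.2.star_eq] using
        posSemidef_conjTranspose_mul_self (Z : Matrix n n ℂ)
    have hY : ((X : Matrix n n ℂ) * X + 1).PosSemidef := (hsq X).add .one
    refine ⟨⟨X * X + 1, hY.isHermitian⟩, mem_closure_range_outer.2 hY, isAbove_det_of_posDef ?_⟩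
    have hsum := PosDef.posSemidef_add (hsq (X + (1 / 2 : ℝ) • 1))
      (PosDef.one.smul (by norm_num : (0 : ℝ) < 3 / 4))
    have hsquare : (X + (X * X + 1) : Matrix n n ℂ)
        = ((X + (1 / 2 : ℝ) • 1 : selfAdjoint (Matrix n n ℂ)) : Matrix n n ℂ)
          * (X + (1 / 2 : ℝ) • 1 : selfAdjoint (Matrix n n ℂ)) + (3 / 4 : ℝ) • 1 := by
      simp only [AddSubgroup.coe_add, selfAdjoint.val_smul, selfAdjoint.val_one, add_mul, mul_add,
        smul_mul_assoc, mul_smul_comm, one_mul, mul_one]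
      module
    change (X + (X * X + 1) : Matrix n n ℂ).PosDef
    rwa [hsquare]

theorem bwdDiff_det_smul_one {c : ℝ} (hc : c ≠ 0) (v : EuclideanSpace ℂ n) :
    ∇_[outer v] (hermRe det) (c • 1 : selfAdjoint (Matrix n n ℂ))
      = ‖v‖ ^ 2 / c * hermRe det (c • 1 : selfAdjoint (Matrix n n ℂ)) := by
  have hnorm : star v.ofLp ⬝ᵥ v.ofLp = ((‖v‖ ^ 2 : ℝ) : ℂ) := by
    rw [dotProduct_comm, ← EuclideanSpace.inner_eq_star_dotProduct, inner_self_eq_norm_sq_to_K]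
    norm_cast
  have hdet := det_smul_one_sub_vecMulVec (n := n) (Complex.ofReal_ne_zero.2 hc) v (star v)
  rw [hnorm, ← Complex.ofReal_div, ← Complex.ofReal_one, ← Complex.ofReal_sub] at hdet
  have hre := congrArg Complex.re hdet
  rw [Complex.re_ofReal_mul] at hre
  have hsub : hermRe det (c • 1 - outer v)
      = (1 - ‖v‖ ^ 2 / c) * hermRe det (c • 1 : selfAdjoint (Matrix n n ℂ)) := by
    simpa [hermRe, outer] using hre
  rw [bwdDiff, hsub]
  ring

theorem bwdDiff_det_smul_one_add_le {c : ℝ} (hc : 0 < c) {Y : selfAdjoint (Matrix n n ℂ)}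
    (hY : (Y : Matrix n n ℂ).PosSemidef) (v : EuclideanSpace ℂ n) :
    ∇_[outer v] (hermRe det) (c • 1 + Y) ≤ ‖v‖ ^ 2 / c * hermRe det (c • 1 + Y) := by
  have hpos : ((c • 1 : selfAdjoint (Matrix n n ℂ)) : Matrix n n ℂ).PosDef := PosDef.one.smul hc
  have habove := isAbove_det_of_posDef hpos
  have hle := isRealStable_det.isRayleigh.bwdDiff_mul_le habove (Set.mem_range_self v)
    (mem_closure_range_outer.2 hY)
  rw [bwdDiff_det_smul_one hc.ne', mul_right_comm] at hle
  exact le_of_mul_le_mul_right hle habove.pos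

theorem exists_posSemidef_add_sum_sub_sum {ι : Type*} (s : Finset ι)
    (w : ι → Bool → EuclideanSpace ℂ n) {t : ι → ℝ} (ht : ∀ i, t i ∈ Set.Icc 0 1) {τ : ℝ}
    (hτ₀ : 0 < τ) (hτ₁ : τ ≤ 1) (hw : ∀ i ∈ s, ∀ j, ‖w i j‖ ^ 2 ≤ τ ^ 2 / 8)
    (hE : ((1 - ∑ i ∈ s, mean (fun j => outer (w i j)) (t i) : selfAdjoint (Matrix n n ℂ)) :
      Matrix n n ℂ).PosSemidef) :
    ∃ c : ι → Bool,
      ((τ • 1 + ∑ i ∈ s, mean (fun j => outer (w i j)) (t i) - ∑ i ∈ s, outer (w i (c i)) :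
        selfAdjoint (Matrix n n ℂ)) : Matrix n n ℂ).PosSemidef := by
  set E := ∑ i ∈ s, mean (fun j => outer (w i j)) (t i)
  set Y : selfAdjoint (Matrix n n ℂ) := (τ / 2) • (1 - E)
  have hY : (Y : Matrix n n ℂ).PosSemidef := hE.smul (half_pos hτ₀).le
  have hX : IsAbove (Set.range outer) (hermRe det) ((τ / 2) • 1 + Y) :=
    isAbove_det_of_posDef ((PosDef.one.smul (half_pos hτ₀)).add_posSemidef hY)
  have hbarrier (i : ι) (hi : i ∈ s) (j : Bool) :
      (1 + τ / 2) * ∇_[outer (w i j)] (hermRe det) ((τ / 2) • 1 + Y)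
        ≤ (1 + τ / 2 - 1) * hermRe det ((τ / 2) • 1 + Y) := by
    have hquot : (1 + τ / 2) * (‖w i j‖ ^ 2 / (τ / 2)) ≤ 1 + τ / 2 - 1 := by
      have hle : ‖w i j‖ ^ 2 / (τ / 2) ≤ τ / 4 := by
        rw [div_le_iff₀ (half_pos hτ₀)]
        linarith [hw i hi j]
      nlinarith
    refine (mul_le_mul_of_nonneg_left (bwdDiff_det_smul_one_add_le (half_pos hτ₀) hY _)
      (by linarith)).trans ?_
    rw [← mul_assoc]
    exact mul_le_mul_of_nonneg_right hquot hX.pos.le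
  obtain ⟨c, hc⟩ := isRealStable_det.exists_isAbove_add_sum_sub_sum s w ht (by linarith)
    (by linarith) hX hbarrier
  have hshift : (τ / 2) • 1 + Y + (1 + τ / 2) • E = τ • 1 + E := by module
  rw [hshift] at hc
  exact ⟨c, posSemidef_of_isAbove_det hc⟩

end RealStable

section QuadraticForm

open Matrix
open scoped ComplexOrder InnerProductSpace

variable {n : Type*} [Fintype n]

/-- The quadratic form `X ↦ xᴴ X x` at the vector `x`, as a linear functional of the Hermitian
matrix `X`. -/
def quadForm (x : EuclideanSpace ℂ n) : selfAdjoint (Matrix n n ℂ) →ₗ[ℝ] ℝ where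
  toFun X := (star x.ofLp ⬝ᵥ (X : Matrix n n ℂ) *ᵥ x.ofLp).re
  map_add' X Y := by
    rw [AddSubgroup.coe_add, add_mulVec, dotProduct_add, Complex.add_re]
  map_smul' c X := by
    rw [selfAdjoint.val_smul, smul_mulVec, dotProduct_smul, Complex.real_smul,
      Complex.re_ofReal_mul, RingHom.id_apply, smul_eq_mul]

theorem quadForm_outer (x v : EuclideanSpace ℂ n) : quadForm x (outer v) = ‖⟪v, x⟫_ℂ‖ ^ 2 := by
  have hquad : star x.ofLp ⬝ᵥ (outer v : Matrix n n ℂ) *ᵥ x.ofLp = ((‖⟪v, x⟫_ℂ‖ ^ 2 : ℝ) : ℂ) := by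
    have hvx : star v.ofLp ⬝ᵥ x.ofLp = ⟪v, x⟫_ℂ := by
      rw [dotProduct_comm, EuclideanSpace.inner_eq_star_dotProduct]
    have hxv : star x.ofLp ⬝ᵥ v.ofLp = starRingEnd ℂ ⟪v, x⟫_ℂ := by
      rw [dotProduct_comm, ← EuclideanSpace.inner_eq_star_dotProduct, inner_conj_symm]
    rw [outer, vecMulVec_mulVec, hvx, op_smul_eq_smul, dotProduct_smul, hxv, smul_eq_mul,
      Complex.mul_conj']
    norm_cast
  exact congrArg Complex.re hquad

theorem quadForm_one [DecidableEq n] (x : EuclideanSpace ℂ n) : quadForm x 1 = ‖x‖ ^ 2 := by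
  change (star x.ofLp ⬝ᵥ (1 : Matrix n n ℂ) *ᵥ x.ofLp).re = _
  rw [one_mulVec, dotProduct_comm, ← EuclideanSpace.inner_eq_star_dotProduct,
    inner_self_eq_norm_sq_to_K]
  norm_cast

theorem posSemidef_iff_quadForm_nonneg {X : selfAdjoint (Matrix n n ℂ)} :
    (X : Matrix n n ℂ).PosSemidef ↔ ∀ x, 0 ≤ quadForm x X := by
  refine ⟨fun hX x => (Complex.nonneg_iff.1 (hX.dotProduct_mulVec_nonneg x)).1, fun hX =>
    .of_dotProduct_mulVec_nonneg X.2 fun x => Complex.nonneg_iff.2 ⟨hX (WithLp.toLp 2 x), ?_⟩⟩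
  exact (IsHermitian.im_star_dotProduct_mulVec_self X.2 x).symm

end QuadraticForm

section Discrepancy

open scoped InnerProductSpace

variable {ι : Type*}

theorem exists_sum_norm_inner_sq_le_euclideanSpace {n : Type*} [Fintype n] (s : Finset ι)
    (w : ι → Bool → EuclideanSpace ℂ n) {t : ι → ℝ} (ht : ∀ i, t i ∈ Set.Icc 0 1) {τ : ℝ}
    (hτ₀ : 0 < τ) (hτ₁ : τ ≤ 1) (hw : ∀ i ∈ s, ∀ j, ‖w i j‖ ^ 2 ≤ τ ^ 2 / 8)
    (hsum : ∀ x, ∑ i ∈ s, mean (fun j => ‖⟪w i j, x⟫_ℂ‖ ^ 2) (t i) ≤ ‖x‖ ^ 2) :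
    ∃ c : ι → Bool, ∀ x, ∑ i ∈ s, ‖⟪w i (c i), x⟫_ℂ‖ ^ 2
      ≤ τ * ‖x‖ ^ 2 + ∑ i ∈ s, mean (fun j => ‖⟪w i j, x⟫_ℂ‖ ^ 2) (t i) := by
  classical
  have hmean (x : EuclideanSpace ℂ n) :
      quadForm x (∑ i ∈ s, mean (fun j => outer (w i j)) (t i))
        = ∑ i ∈ s, mean (fun j => ‖⟪w i j, x⟫_ℂ‖ ^ 2) (t i) := by
    simp only [map_sum, map_mean, quadForm_outer]
  obtain ⟨c, hc⟩ := exists_posSemidef_add_sum_sub_sum s w ht hτ₀ hτ₁ hw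
    (posSemidef_iff_quadForm_nonneg.2 fun x => by
      rw [map_sub, hmean, quadForm_one]
      exact sub_nonneg.2 (hsum x))
  refine ⟨c, fun x => ?_⟩
  have hx := posSemidef_iff_quadForm_nonneg.1 hc x
  rw [map_sub, map_add, map_smul, hmean, quadForm_one, map_sum, smul_eq_mul, sub_nonneg] at hx
  simpa only [quadForm_outer] using hx

variable {E : Type*} [NormedAddCommGroup E] [InnerProductSpace ℂ E]

theorem exists_sum_norm_inner_sq_le (s : Finset ι) (w : ι → Bool → E) {t : ι → ℝ}
    (ht : ∀ i, t i ∈ Set.Icc 0 1) {τ : ℝ} (hτ₀ : 0 < τ) (hτ₁ : τ ≤ 1)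
    (hw : ∀ i ∈ s, ∀ j, ‖w i j‖ ^ 2 ≤ τ ^ 2 / 8)
    (hsum : ∀ x, ∑ i ∈ s, mean (fun j => ‖⟪w i j, x⟫_ℂ‖ ^ 2) (t i) ≤ ‖x‖ ^ 2) :
    ∃ c : ι → Bool, ∀ x, ∑ i ∈ s, ‖⟪w i (c i), x⟫_ℂ‖ ^ 2
      ≤ τ * ‖x‖ ^ 2 + ∑ i ∈ s, mean (fun j => ‖⟪w i j, x⟫_ℂ‖ ^ 2) (t i) := by
  let K : Submodule ℂ E := Submodule.span ℂ ((fun p : ι × Bool => w p.1 p.2) '' (s ×ˢ Finset.univ))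
  have hfin : FiniteDimensional ℂ K :=
    FiniteDimensional.span_of_finite ℂ (Set.toFinite _)
  let b := stdOrthonormalBasis ℂ K
  let coord (x : E) := b.repr (K.orthogonalProjectionOnto x)
  have hnorm (x : E) : ‖coord x‖ ^ 2 ≤ ‖x‖ ^ 2 := by
    rw [LinearIsometryEquiv.norm_map]
    gcongr
    exact K.norm_orthogonalProjectionOnto_apply_le x
  have hinner (x : K) (y : E) : ⟪b.repr x, coord y⟫_ℂ = ⟪(x : E), y⟫_ℂ := by
    rw [LinearIsometryEquiv.inner_map_map, Submodule.inner_orthogonalProjectionOnto_eq_of_mem_left]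
  have hwK {i : ι} (hi : i ∈ s) (j : Bool) (x : E) : ⟪coord (w i j), coord x⟫_ℂ = ⟪w i j, x⟫_ℂ := by
    have hmem : w i j ∈ K := Submodule.subset_span ⟨(i, j), by simpa using hi, rfl⟩
    rw [hinner, Submodule.coe_orthogonalProjectionOnto_apply, K.starProjection_eq_self_iff.2 hmem]
  have hmean (x : E) : ∑ i ∈ s, mean (fun j => ‖⟪coord (w i j), coord x⟫_ℂ‖ ^ 2) (t i)
      = ∑ i ∈ s, mean (fun j => ‖⟪w i j, x⟫_ℂ‖ ^ 2) (t i) :=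
    Finset.sum_congr rfl fun i hi => by simp only [hwK hi]
  obtain ⟨c, hc⟩ := exists_sum_norm_inner_sq_le_euclideanSpace s (fun i j => coord (w i j)) ht
    hτ₀ hτ₁ (fun i hi j => (hnorm _).trans (hw i hi j)) fun x => by
      obtain ⟨y, rfl⟩ := b.repr.surjective x
      have hy : b.repr y = coord y := by
        simp only [coord, Submodule.orthogonalProjectionOnto_mem_subspace_eq_self]
      rw [hy, hmean, ← hy, LinearIsometryEquiv.norm_map]
      exact hsum y
  refine ⟨c, fun x => ?_⟩
  calc ∑ i ∈ s, ‖⟪w i (c i), x⟫_ℂ‖ ^ 2 = ∑ i ∈ s, ‖⟪coord (w i (c i)), coord x⟫_ℂ‖ ^ 2 :=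
        Finset.sum_congr rfl fun i hi => by rw [hwK hi]
    _ ≤ τ * ‖coord x‖ ^ 2 + ∑ i ∈ s, mean (fun j => ‖⟪w i j, x⟫_ℂ‖ ^ 2) (t i) := by
        rw [← hmean]
        exact hc (coord x)
    _ ≤ τ * ‖x‖ ^ 2 + ∑ i ∈ s, mean (fun j => ‖⟪w i j, x⟫_ℂ‖ ^ 2) (t i) := by
        exact add_le_add_left (mul_le_mul_of_nonneg_left (hnorm x) hτ₀.le) _

/-- A Bessel sequence with bound `1`, that is, a family with `∑ u i ⊗ u i ≤ I`. -/
def IsBessel (u : ι → E) : Prop :=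
  ∀ (s : Finset ι) (x : E), ∑ i ∈ s, ‖⟪u i, x⟫_ℂ‖ ^ 2 ≤ ‖x‖ ^ 2

variable {u : ι → E} {t : ι → ℝ} {τ : ℝ}

-- Choosing between `(u i, 0)` and `(0, u i)` controls the two signs of the discrepancy at once.
theorem IsBessel.exists_abs_sum_mul_norm_inner_sq_le (hu : IsBessel u)
    (ht : ∀ i, t i ∈ Set.Icc 0 1) (hτ₀ : 0 < τ) (hτ₁ : τ ≤ 1) {s : Finset ι}
    (hs : ∀ i ∈ s, ‖u i‖ ^ 2 ≤ τ ^ 2 / 8) :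
    ∃ c : ι → Bool, ∀ x,
      |∑ i ∈ s, ((if c i then 1 else 0) - t i) * ‖⟪u i, x⟫_ℂ‖ ^ 2| ≤ τ * ‖x‖ ^ 2 := by
  let w (i : ι) (j : Bool) : WithLp 2 (E × E) :=
    WithLp.toLp 2 (if j then (u i, 0) else (0, u i))
  have hinner (i : ι) (j : Bool) (x : WithLp 2 (E × E)) :
      ‖⟪w i j, x⟫_ℂ‖ ^ 2 = if j then ‖⟪u i, x.fst⟫_ℂ‖ ^ 2 else ‖⟪u i, x.snd⟫_ℂ‖ ^ 2 := by
    cases j <;> simp [w, WithLp.prod_inner_apply]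
  obtain ⟨c, hc⟩ := exists_sum_norm_inner_sq_le s w ht hτ₀ hτ₁
    (fun i hi j => by cases j <;> simpa [w, WithLp.prod_norm_sq_eq_of_L2] using hs i hi)
    fun x => by
      rw [WithLp.prod_norm_sq_eq_of_L2]
      refine le_trans ?_ (add_le_add (hu s x.fst) (hu s x.snd))
      rw [← Finset.sum_add_distrib]
      refine Finset.sum_le_sum fun i _ => ?_
      simp only [mean, hinner, if_true, Bool.false_eq_true, if_false, smul_eq_mul]
      exact add_le_add (mul_le_of_le_one_left (sq_nonneg _) (ht i).2)
        (mul_le_of_le_one_left (sq_nonneg _) (sub_le_self _ (ht i).1))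
  refine ⟨c, fun x => abs_le.2 ⟨?_, ?_⟩⟩
  · have hx := hc (WithLp.toLp 2 (0, x))
    have hnorm : ‖WithLp.toLp 2 ((0 : E), x)‖ ^ 2 = ‖x‖ ^ 2 := by
      simp
    rw [hnorm, ← sub_le_iff_le_add, ← Finset.sum_sub_distrib] at hx
    rw [neg_le, ← Finset.sum_neg_distrib]
    refine (Finset.sum_congr rfl fun i _ => ?_).trans_le hx
    simp only [mean, hinner]
    cases c i <;> simp [sub_mul]
  · have hx := hc (WithLp.toLp 2 (x, 0))
    have hnorm : ‖WithLp.toLp 2 (x, (0 : E))‖ ^ 2 = ‖x‖ ^ 2 := by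
      simp
    rw [hnorm, ← sub_le_iff_le_add, ← Finset.sum_sub_distrib] at hx
    refine (Finset.sum_congr rfl fun i _ => ?_).trans_le hx
    simp only [mean, hinner]
    cases c i <;> simp [sub_mul]

theorem inner_rankOne_apply_self (v x : E) : ⟪rankOne v x, x⟫_ℂ = ((‖⟪v, x⟫_ℂ‖ ^ 2 : ℝ) : ℂ) := by
  change ⟪⟪v, x⟫_ℂ • v, x⟫_ℂ = _
  rw [inner_smul_left, Complex.conj_mul', Complex.ofReal_pow]

theorem norm_sum_smul_rankOne_le {s : Finset ι} {m : ι → ℝ} (hτ : 0 ≤ τ)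
    (h : ∀ x, |∑ i ∈ s, m i * ‖⟪u i, x⟫_ℂ‖ ^ 2| ≤ τ * ‖x‖ ^ 2) :
    ‖∑ i ∈ s, (m i : ℂ) • rankOne (u i)‖ ≤ τ := by
  have hsymm : ((∑ i ∈ s, (m i : ℂ) • rankOne (u i) : E →L[ℂ] E) : E →ₗ[ℂ] E).IsSymmetric := by
    rw [ContinuousLinearMap.toLinearMap_sum]
    exact LinearMap.isSymmetric_sum s fun i _ =>
      (InnerProductSpace.isSymmetric_rankOne_self (u i)).smul (Complex.conj_ofReal _)
  rw [ContinuousLinearMap.norm_eq_iSup_rayleighQuotient _ hsymm]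
  refine ciSup_le fun x => ?_
  have hform : (∑ i ∈ s, (m i : ℂ) • rankOne (u i)).reApplyInnerSelf x
      = ∑ i ∈ s, m i * ‖⟪u i, x⟫_ℂ‖ ^ 2 := by
    rw [ContinuousLinearMap.reApplyInnerSelf_apply, sum_apply, sum_inner, map_sum]
    refine Finset.sum_congr rfl fun i _ => ?_
    rw [smul_apply, inner_smul_left, inner_rankOne_apply_self, Complex.conj_ofReal,
      ← Complex.ofReal_mul]
    exact Complex.ofReal_re _
  rw [ContinuousLinearMap.rayleighQuotient, hform, abs_div, abs_sq]
  exact div_le_of_le_mul₀ (sq_nonneg _) hτ (h x)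

theorem IsBessel.exists_norm_sum_smul_rankOne_le (hu : IsBessel u) (ht : ∀ i, t i ∈ Set.Icc 0 1)
    (hτ₀ : 0 < τ) (hτ₁ : τ ≤ 1) {s : Finset ι} (hs : ∀ i ∈ s, ‖u i‖ ^ 2 ≤ τ ^ 2 / 8) :
    ∃ c : ι → Bool,
      ‖∑ i ∈ s, (((if c i then 1 else 0) - t i : ℝ) : ℂ) • rankOne (u i)‖ ≤ τ :=
  (hu.exists_abs_sum_mul_norm_inner_sq_le ht hτ₀ hτ₁ hs).imp fun _ hc =>
    norm_sum_smul_rankOne_le hτ₀.le hc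

end Discrepancy

section Bessel

open scoped InnerProductSpace

variable {ι H : Type*} [NormedAddCommGroup H] [InnerProductSpace ℂ H]

theorem isBessel_of_tendsto {u : ℕ → H} {A : H →L[ℂ] H}
    (hA : ∀ v, Tendsto (fun n => ∑ i ∈ Finset.range n, rankOne (u i) v) atTop (nhds (A v)))
    (hAle : (1 - A).IsPositive) : IsBessel u := by
  intro s x
  have hform (n : ℕ) : RCLike.re ⟪∑ i ∈ Finset.range n, rankOne (u i) x, x⟫_ℂ
      = ∑ i ∈ Finset.range n, ‖⟪u i, x⟫_ℂ‖ ^ 2 := by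
    simp only [sum_inner, inner_rankOne_apply_self, ← Complex.ofReal_sum, RCLike.re_to_complex,
      Complex.ofReal_re]
  have hlim : Tendsto (fun n => ∑ i ∈ Finset.range n, ‖⟪u i, x⟫_ℂ‖ ^ 2) atTop
      (nhds (RCLike.re ⟪A x, x⟫_ℂ)) :=
    ((RCLike.continuous_re.tendsto _).comp ((hA x).inner tendsto_const_nhds)).congr hform
  have hmono : Monotone fun n => ∑ i ∈ Finset.range n, ‖⟪u i, x⟫_ℂ‖ ^ 2 :=
    fun m n hmn => Finset.sum_le_sum_of_subset_of_nonneg (Finset.range_mono hmn)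
      fun _ _ _ => sq_nonneg _
  obtain ⟨N, hN⟩ := s.exists_nat_subset_range
  calc ∑ i ∈ s, ‖⟪u i, x⟫_ℂ‖ ^ 2 ≤ ∑ i ∈ Finset.range N, ‖⟪u i, x⟫_ℂ‖ ^ 2 :=
        Finset.sum_le_sum_of_subset_of_nonneg hN fun _ _ _ => sq_nonneg _
    _ ≤ RCLike.re ⟪A x, x⟫_ℂ := hmono.ge_of_tendsto hlim N
    _ ≤ RCLike.re ⟪x, x⟫_ℂ := by
        rw [← sub_nonneg, ← map_sub, ← inner_sub_left]
        exact hAle.re_inner_nonneg_left x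
    _ = ‖x‖ ^ 2 := inner_self_eq_norm_sq x

namespace IsBessel

theorem norm_sum_smul_sq_le {u : ι → H} (hu : IsBessel u) (s : Finset ι) (c : ι → ℂ) :
    ‖∑ i ∈ s, c i • u i‖ ^ 2 ≤ ∑ i ∈ s, ‖c i‖ ^ 2 := by
  set x := ∑ i ∈ s, c i • u i with hx
  have hcauchy : ‖x‖ ^ 2 ≤ ∑ i ∈ s, ‖c i‖ * ‖⟪u i, x⟫_ℂ‖ := by
    calc ‖x‖ ^ 2 = ‖∑ i ∈ s, ⟪c i • u i, x⟫_ℂ‖ := by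
          rw [← sum_inner, ← hx, ← inner_self_re_eq_norm, inner_self_eq_norm_sq]
      _ ≤ ∑ i ∈ s, ‖c i‖ * ‖⟪u i, x⟫_ℂ‖ := (norm_sum_le _ _).trans_eq <|
          Finset.sum_congr rfl fun i _ => by rw [inner_smul_left, norm_mul, RCLike.norm_conj]
  have hyoung : 2 * ∑ i ∈ s, ‖c i‖ * ‖⟪u i, x⟫_ℂ‖
      ≤ ∑ i ∈ s, ‖c i‖ ^ 2 + ∑ i ∈ s, ‖⟪u i, x⟫_ℂ‖ ^ 2 := by
    rw [Finset.mul_sum, ← Finset.sum_add_distrib]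
    exact Finset.sum_le_sum fun i _ => by
      rw [← mul_assoc]
      exact two_mul_le_add_sq _ _
  linarith [hu s x]

theorem summable_smul_rankOne [CompleteSpace H] {u : ι → H} (hu : IsBessel u) {m : ι → ℝ}
    (hm : ∀ i, m i ∈ Set.Icc 0 1) (v : H) : Summable fun i => (m i : ℂ) • rankOne (u i) v := by
  have hsq : Summable fun i => ‖⟪u i, v⟫_ℂ‖ ^ 2 :=
    summable_of_sum_le (fun _ => sq_nonneg _) fun s => hu s v
  rw [summable_iff_vanishing_norm] at hsq ⊢
  intro ε hε
  obtain ⟨s, hs⟩ := hsq (ε ^ 2) (pow_pos hε 2)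
  refine ⟨s, fun r hr => lt_of_pow_lt_pow_left₀ 2 hε.le ?_⟩
  calc ‖∑ i ∈ r, (m i : ℂ) • rankOne (u i) v‖ ^ 2
      = ‖∑ i ∈ r, ((m i : ℂ) * ⟪u i, v⟫_ℂ) • u i‖ ^ 2 := by simp only [mul_smul]; rfl
    _ ≤ ∑ i ∈ r, ‖(m i : ℂ) * ⟪u i, v⟫_ℂ‖ ^ 2 := hu.norm_sum_smul_sq_le r _
    _ ≤ ∑ i ∈ r, ‖⟪u i, v⟫_ℂ‖ ^ 2 := by
        refine Finset.sum_le_sum fun i _ => pow_le_pow_left₀ (norm_nonneg _) ?_ 2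
        rw [norm_mul, Complex.norm_real, Real.norm_of_nonneg (hm i).1]
        exact mul_le_of_le_one_left (norm_nonneg _) (hm i).2
    _ < ε ^ 2 := (le_abs_self _).trans_lt (hs r hr)

theorem exists_tendsto_sum_smul_rankOne [CompleteSpace H] {u : ℕ → H} (hu : IsBessel u)
    {m : ℕ → ℝ} (hm : ∀ i, m i ∈ Set.Icc 0 1) :
    ∃ T : H →L[ℂ] H, ∀ v, Tendsto (fun n => ∑ i ∈ Finset.range n, (m i : ℂ) • rankOne (u i) v)
      atTop (nhds (T v)) := by
  have hlim (v : H) := (hu.summable_smul_rankOne hm v).hasSum.tendsto_sum_nat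
  let S (n : ℕ) : H →L[ℂ] H := ∑ i ∈ Finset.range n, (m i : ℂ) • rankOne (u i)
  have hS : Tendsto (fun n x => S n x) atTop
      (nhds fun v => ∑' i, (m i : ℂ) • rankOne (u i) v) :=
    tendsto_pi_nhds.2 fun v => (hlim v).congr fun n => by rw [sum_apply]; rfl
  exact ⟨continuousLinearMapOfTendsto S hS, hlim⟩

end IsBessel

end Bessel

section Compactness

theorem exists_forall_eqOn_of_pairwise_disjoint {κ α β : Type*} [Nonempty β] {s : κ → Set α}
    (hs : Pairwise (Function.onFun Disjoint s)) (c : κ → α → β) :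
    ∃ f : α → β, ∀ k, Set.EqOn f (c k) (s k) := by
  classical
  refine ⟨fun a => if h : ∃ k, a ∈ s k then c h.choose a else Classical.arbitrary β,
    fun k a ha => ?_⟩
  have h : ∃ k, a ∈ s k := ⟨k, ha⟩
  have hk : h.choose = k := hs.eq (Set.not_disjoint_iff.2 ⟨a, h.choose_spec, ha⟩)
  exact (dif_pos h).trans (by rw [hk])

theorem exists_strictMono_forall_ge_le {a : ℕ → ℝ} (ha : Tendsto a atTop (nhds 0)) {ε : ℕ → ℝ}
    (hε : ∀ k, 0 < ε k) : ∃ N : ℕ → ℕ, StrictMono N ∧ ∀ k, ∀ i ≥ N k, a i ≤ ε k :=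
  extraction_forall_of_eventually fun k =>
    eventually_forall_ge_atTop.2 (ha.eventually_le_const (hε k))

theorem isCompactOperator_of_cauchySeq {𝕜 E F : Type*} [NontriviallyNormedField 𝕜]
    [NormedAddCommGroup E] [NormedSpace 𝕜 E] [NormedAddCommGroup F] [NormedSpace 𝕜 F]
    [CompleteSpace F] {S : ℕ → E →L[𝕜] F} {D : E →L[𝕜] F} (hS : CauchySeq S)
    (hcomp : ∀ k, IsCompactOperator (S k))
    (hD : ∀ v, Tendsto (fun k => S k v) atTop (nhds (D v))) : IsCompactOperator D := by
  obtain ⟨L, hL⟩ := cauchySeq_tendsto_of_complete hS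
  have hDL : D = L := by
    ext v
    have heval := (ContinuousLinearMap.apply 𝕜 F v).continuous.tendsto L
    exact tendsto_nhds_unique (hD v) (heval.comp hL)
  rw [hDL]
  exact isCompactOperator_of_tendsto hL (.of_forall hcomp)

variable {ι H : Type*} [NormedAddCommGroup H] [InnerProductSpace ℂ H]

theorem isCompactOperator_rankOne (v : H) : IsCompactOperator (rankOne v) := by
  have hcoord : IsCompactOperator (innerSL ℂ v : H →L[ℂ] ℂ) :=
    isCompactOperator_of_locallyCompactSpace_dom _
  exact hcoord.clm_comp ((1 : ℂ →L[ℂ] ℂ).smulRight v)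

theorem isCompactOperator_sum_smul_rankOne (s : Finset ι) (u : ι → H) (m : ι → ℂ) :
    IsCompactOperator (∑ i ∈ s, m i • rankOne (u i) : H →L[ℂ] H) := by
  have hmem : ∑ i ∈ s, m i • rankOne (u i) ∈ compactOperator (RingHom.id ℂ) H H :=
    Submodule.sum_mem _ fun i _ => Submodule.smul_mem _ _ (isCompactOperator_rankOne (u i))
  exact hmem

theorem IsBessel.exists_forall_norm_sum_Ico_le {u : ℕ → H} (hu : IsBessel u)
    (hlim : Tendsto (fun i => ‖u i‖) atTop (nhds 0)) {t : ℕ → ℝ} (ht : ∀ i, t i ∈ Set.Icc 0 1) :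
    ∃ (f : ℕ → Bool) (N : ℕ → ℕ), StrictMono N ∧ ∀ k,
      ‖∑ i ∈ Finset.Ico (N k) (N (k + 1)),
        (((if f i then 1 else 0) - t i : ℝ) : ℂ) • rankOne (u i)‖ ≤ (1 / 2) ^ k := by
  have hsq : Tendsto (fun i => ‖u i‖ ^ 2) atTop (nhds 0) := by
    simpa only [zero_pow two_ne_zero] using hlim.pow 2
  obtain ⟨N, hN, hNu⟩ := exists_strictMono_forall_ge_le hsq
    (ε := fun k => ((1 / 2) ^ k) ^ 2 / 8) fun k => by positivity
  choose c hc using fun k => hu.exists_norm_sum_smul_rankOne_le ht (pow_pos one_half_pos k)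
    (pow_le_one₀ one_half_pos.le one_half_lt_one.le) (s := Finset.Ico (N k) (N (k + 1)))
    fun i hi => hNu k i (Finset.mem_Ico.1 hi).1
  obtain ⟨f, hf⟩ :=
    exists_forall_eqOn_of_pairwise_disjoint hN.monotone.pairwise_disjoint_on_Ico_succ c
  refine ⟨f, N, hN, fun k => ?_⟩
  rw [Finset.sum_congr rfl fun i hi => by rw [hf k (Finset.mem_Ico.1 hi)]]
  exact hc k

theorem isCompactOperator_of_forall_norm_sum_Ico_le [CompleteSpace H] {u : ℕ → H} {m : ℕ → ℂ}
    {D : H →L[ℂ] H}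
    (hD : ∀ v, Tendsto (fun n => ∑ i ∈ Finset.range n, m i • rankOne (u i) v) atTop (nhds (D v)))
    {N : ℕ → ℕ} (hN : StrictMono N)
    (hm : ∀ k, ‖∑ i ∈ Finset.Ico (N k) (N (k + 1)), m i • rankOne (u i)‖ ≤ (1 / 2) ^ k) :
    IsCompactOperator D := by
  refine isCompactOperator_of_cauchySeq
    (S := fun k => ∑ i ∈ Finset.range (N k), m i • rankOne (u i))
    (cauchySeq_of_le_geometric (1 / 2) 1 one_half_lt_one fun k => ?_)
    (fun k => isCompactOperator_sum_smul_rankOne _ _ _) fun v => ?_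
  · rw [dist_comm, dist_eq_norm, one_mul,
      ← Finset.sum_Ico_eq_sub _ (hN.monotone (Nat.le_succ k))]
    exact hm k
  · refine ((hD v).comp hN.tendsto_atTop).congr fun k => ?_
    rw [sum_apply]
    rfl

end Compactness

/-- If `(uᵢ)` is a sequence of vectors in a complex Hilbert space with `‖uᵢ‖ → 0` and
`∑ᵢ uᵢ ⊗ uᵢ ≤ I` (the partial sums converge strongly to an operator `A` with `I - A`
positive), and `0 ≤ tᵢ ≤ 1` for each `i`, then there is a set of indices `S ⊆ ℕ`
(encoded by a boolean function `f`, with `S = {i | f i = true}`) such that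
`∑_{i ∈ S} uᵢ ⊗ uᵢ − ∑ᵢ tᵢ uᵢ ⊗ uᵢ` (both sums existing in the strong operator
topology) is a compact operator. -/
theorem stmt7 {H : Type*} [NormedAddCommGroup H] [InnerProductSpace ℂ H] [CompleteSpace H]
    (u : ℕ → H) (A : H →L[ℂ] H)
    (hu : Tendsto (fun i => ‖u i‖) atTop (nhds 0))
    (hA : ∀ v : H,
      Tendsto (fun n => ∑ i ∈ Finset.range n, rankOne (u i) v) atTop (nhds (A v)))
    (hApos : A.IsPositive) (hAle : (1 - A).IsPositive)
    (t : ℕ → ℝ) (ht0 : ∀ i, 0 ≤ t i) (ht1 : ∀ i, t i ≤ 1) :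
    ∃ (f : ℕ → Bool) (T T' : H →L[ℂ] H),
      (∀ v : H,
        Tendsto (fun n => ∑ i ∈ (Finset.range n).filter (fun i => f i = true),
          rankOne (u i) v) atTop (nhds (T v))) ∧
      (∀ v : H,
        Tendsto (fun n => ∑ i ∈ Finset.range n, (t i : ℂ) • rankOne (u i) v)
          atTop (nhds (T' v))) ∧
      IsCompactOperator (T - T' : H →L[ℂ] H) := by
  have hBessel : IsBessel u := isBessel_of_tendsto hA hAle
  have ht (i : ℕ) : t i ∈ Set.Icc 0 1 := ⟨ht0 i, ht1 i⟩
  obtain ⟨f, N, hN, hf⟩ := hBessel.exists_forall_norm_sum_Ico_le hu ht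
  have hm (i : ℕ) : (if f i then 1 else 0 : ℝ) ∈ Set.Icc (0 : ℝ) 1 := by split_ifs <;> simp
  obtain ⟨T, hT⟩ := hBessel.exists_tendsto_sum_smul_rankOne hm
  obtain ⟨T', hT'⟩ := hBessel.exists_tendsto_sum_smul_rankOne ht
  refine ⟨f, T, T', fun v => (hT v).congr fun n => ?_, hT',
    isCompactOperator_of_forall_norm_sum_Ico_le (fun v => ?_) hN hf⟩
  · simp [Finset.sum_filter, ite_smul]
  · refine ((hT v).sub (hT' v)).congr fun n => ?_
    simp only [← Finset.sum_sub_distrib, ← sub_smul, ← Complex.ofReal_sub]
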